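/- For all natural numbers l₁, l₂, l₃ and every real number E, the following identity holds: ∑_{r=0}^{l₁} ∑_{s=0}^{l₂} ∑_{t=0}^{l₃} (-1)^{l₁+l₂-s} · C(E+l₁+s+l₃-t-1, l₃-t) · C(E+r+s-1, s) · C(E+l₂+r+t-1, t) · C(E+r+s-1, r) · C(E+l₁-r+l₂-s+l₃-1, l₁-r) · C(E+l₃+l₂-s-1, l₂-s) = ∑_{r=0}^{l₁} ∑_{s=0}^{l₂} ∑_{t=0}^{l₃} (-1)^{l₁+l₂-s} · C(E+l₁+s+l₃-t-1, l₃-t) · C(E+l₁+s-1, s) · C(E+l₂-s+t-1, t) · C(E+l₂+t+r-1, r) · C(E+l₁-r+l₂-s+l₃-1, l₁-r) · C(E+t+l₂-s-1, l₂-s). -/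

import Mathlib

/-- Generalized binomial coefficient `C(x, m) = x(x-1)⋯(x-m+1)/m!` for a real
number `x` and a natural number `m`. -/
noncomputable def gbinom (x : ℝ) (m : ℕ) : ℝ :=
  (∏ i ∈ Finset.range m, (x - i)) / m.factorial

/-!
Write `M(x, n) = C(x + n - 1, n)`. In the left-hand side, Chu–Vandermonde sums over `t`, and
`M(x + m, n) M(x, m) = C(m + n, m) M(x, m + n)` combines the last two factors: for fixed `r, s`
what remains is `M(E + r, s) M(E + s, r)` times `C(l₁ - r + l₂ - s, l₁ - r)` and a function of
`r + s`. On each diagonal `r + s = n`, the product `M(E + r, s) M(E + s, r)` may be replaced by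
`M(E + l₁, s) M(E + l₂, r)`, because both versions obey the same Pascal recurrence in `(l₁, l₂)`.
Undoing the sum over `t` gives a triple sum which, up to the sign `(-1) ^ l₂`, is invariant under
exchanging the indices `1` and `3`. The right-hand side leads to it in the same way, with
`(t, l₂ - s)` in the role of `(r, s)`.
-/

open Finset (range mem_range mem_range_succ_iff sum_congr)
open Finset.HasAntidiagonal (antidiagonal mem_antidiagonal)
open Ring (multichoose)

section IntegerLowerIndex

/-- The binomial coefficient `C(n, k)` with an integer lower index, equal to `0` for `k < 0`.
Unlike `n.choose` at a truncated difference, it satisfies Pascal's rule at every `k`. -/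
def chooseInt (n : ℕ) : ℤ → ℕ
  | .ofNat k => n.choose k
  | .negSucc _ => 0

theorem chooseInt_natCast (n k : ℕ) : chooseInt n k = n.choose k := rfl

theorem chooseInt_of_neg (n : ℕ) {k : ℤ} (hk : k < 0) : chooseInt n k = 0 := by
  obtain ⟨m, rfl⟩ := Int.eq_negSucc_of_lt_zero hk
  rfl

theorem chooseInt_of_lt {n : ℕ} {k : ℤ} (hk : n < k) : chooseInt n k = 0 := by
  lift k to ℕ using by lia
  exact Nat.choose_eq_zero_of_lt (by exact_mod_cast hk)

theorem chooseInt_succ (n : ℕ) : ∀ k : ℤ, chooseInt (n + 1) k = chooseInt n (k - 1) + chooseInt n k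
  | .negSucc _ => rfl
  | (0 : ℕ) => by
    rw [chooseInt_of_neg n (by lia), chooseInt_natCast, chooseInt_natCast, Nat.choose_zero_right,
      Nat.choose_zero_right]
  | (k + 1 : ℕ) => by
    rw [show ((k + 1 : ℕ) : ℤ) - 1 = k by lia]
    exact Nat.choose_succ_succ n k

theorem sum_antidiagonal_choose_mul {R : Type*} [NonAssocSemiring R] (p q : ℕ) (f : ℕ → ℕ → R) :
    ∑ x ∈ antidiagonal p, ∑ y ∈ antidiagonal q, ((x.2 + y.2).choose x.2 : R) * f x.1 y.1 =
      ∑ n ∈ range (p + q + 1), ∑ z ∈ antidiagonal n,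
        (chooseInt (p + q - n) (p - z.1) : R) * f z.1 z.2 := by
  have maps : ∀ z ∈ range (p + 1) ×ˢ range (q + 1), z.1 + z.2 ∈ range (p + q + 1) := by
    simp only [Finset.mem_product, mem_range]
    lia
  simp only [Finset.Nat.sum_antidiagonal_eq_sum_range_succ_mk]
  rw [← Finset.sum_product', ← Finset.sum_fiberwise_of_maps_to maps]
  refine sum_congr rfl fun n hn ↦ ?_
  rw [← Finset.Nat.sum_antidiagonal_eq_sum_range_succ
    fun r s ↦ (chooseInt (p + q - n) (p - r) : R) * f r s]
  refine Finset.sum_subset_zero_on_sdiff (fun z hz ↦ ?_) (fun z hz ↦ ?_) fun z hz ↦ ?_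
  · simp_all
  · have outside : (p : ℤ) - z.1 < 0 ∨ (p + q - n : ℕ) < (p : ℤ) - z.1 := by
      simp only [Finset.mem_sdiff, Finset.mem_filter, Finset.mem_product, mem_range,
        mem_antidiagonal] at hz hn
      lia
    rcases outside with h | h
    · simp [chooseInt_of_neg _ h]
    · simp [chooseInt_of_lt h]
  · simp only [Finset.mem_filter, Finset.mem_product, mem_range] at hz
    rw [show (p : ℤ) - z.1 = (p - z.1 : ℕ) by lia, chooseInt_natCast,
      show p + q - n = p - z.1 + (q - z.2) by lia]

end IntegerLowerIndex

section Multichoose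

variable {R : Type*} [Ring R] [BinomialRing R]

theorem choose_eq_multichoose {x y : R} {n : ℕ} (h : y = x + n - 1) :
    Ring.choose y n = multichoose x n := by
  rw [h, Ring.multichoose_eq]

theorem multichoose_add {x y : R} (h : Commute x y) (n : ℕ) :
    multichoose (x + y) n = ∑ p ∈ antidiagonal n, multichoose x p.1 * multichoose y p.2 := by
  have key := Ring.add_choose_eq n h.neg_left.neg_right
  rw [← neg_add_rev, add_comm y x, Ring.choose_neg'] at key
  rw [← (MulAction.injective (n : ℤ).negOnePow).eq_iff, key, Finset.smul_sum]
  refine sum_congr rfl fun p hp ↦ ?_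
  rw [Ring.choose_neg', Ring.choose_neg', smul_mul_smul_comm, ← mem_antidiagonal.1 hp,
    Nat.cast_add, Int.negOnePow_add]

theorem multichoose_add_mul_multichoose (x : R) (m n : ℕ) :
    multichoose (x + m) n * multichoose x m = (m + n).choose m * multichoose x (m + n) := by
  have key := Ring.choose_add_smul_choose (x + m - 1) m n
  rw [choose_eq_multichoose (x := x) (by push_cast; abel), choose_eq_multichoose rfl,
    choose_eq_multichoose (x := x + m) (by abel), nsmul_eq_mul, ← Nat.choose_symm_add] at key
  exact key.symm

theorem multichoose_add_mul_multichoose_comm (x : R) (m n : ℕ) :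
    multichoose (x + m) n * multichoose x m = multichoose (x + n) m * multichoose x n := by
  rw [multichoose_add_mul_multichoose, multichoose_add_mul_multichoose, Nat.choose_symm_add,
    add_comm m n]

end Multichoose

section AlternatingSum

variable {R : Type*} [CommRing R] [BinomialRing R]

/-- The coefficient of `u ^ n v ^ p` in `(1 - u v) ^ (-b) * (1 + u) ^ (-a) * (1 + v) ^ L`, which is
one diagonal `r + s = n` of the double sums in Eholzer's identity. -/
def alternatingSum (n L : ℕ) (p : ℤ) (a b : R) : R :=
  ∑ x ∈ antidiagonal n,
    (-1) ^ x.2 * chooseInt L (p - x.1) * (multichoose a x.2 * multichoose b x.1)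

theorem alternatingSum_succ (n L : ℕ) (p : ℤ) (a b : R) :
    alternatingSum n (L + 1) p (a + 1) (b + 1) =
      alternatingSum n L (p - 1) a (b + 1) + alternatingSum n L p (a + 1) b := by
  have pascal (x : ℕ × ℕ) : (chooseInt (L + 1) (p - x.1) : R) =
      chooseInt L (p - 1 - x.1) + chooseInt L (p - x.1) := by
    rw [chooseInt_succ, Nat.cast_add, sub_right_comm]
  unfold alternatingSum
  cases n with
  | zero => simp [chooseInt_succ]
  | succ n =>
    -- Lowering `a` and lowering `b` by Pascal's rule give the same remainder with opposite signs.
    let remainder := ∑ x ∈ antidiagonal n, (-1 : R) ^ x.2 * chooseInt L (p - 1 - x.1) *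
      (multichoose (a + 1) x.2 * multichoose (b + 1) x.1)
    have lower_a : ∑ x ∈ antidiagonal (n + 1), (-1 : R) ^ x.2 * chooseInt L (p - 1 - x.1) *
        (multichoose (a + 1) x.2 * multichoose (b + 1) x.1) =
        ∑ x ∈ antidiagonal (n + 1), (-1 : R) ^ x.2 * chooseInt L (p - 1 - x.1) *
          (multichoose a x.2 * multichoose (b + 1) x.1) - remainder := by
      simp only [remainder, Finset.Nat.sum_antidiagonal_succ', Ring.multichoose_zero_right,
        add_sub_assoc, ← Finset.sum_sub_distrib, Ring.multichoose_succ_succ a]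
      congr! 2 with x
      ring
    have lower_b : ∑ x ∈ antidiagonal (n + 1), (-1 : R) ^ x.2 * chooseInt L (p - x.1) *
        (multichoose (a + 1) x.2 * multichoose (b + 1) x.1) =
        ∑ x ∈ antidiagonal (n + 1), (-1 : R) ^ x.2 * chooseInt L (p - x.1) *
          (multichoose (a + 1) x.2 * multichoose b x.1) + remainder := by
      simp only [remainder, Finset.Nat.sum_antidiagonal_succ, Ring.multichoose_zero_right,
        add_assoc, ← Finset.sum_add_distrib, Ring.multichoose_succ_succ b]
      congr! 2 with x
      rw [show p - 1 - x.1 = p - (x.1 + 1 : ℕ) by lia]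
      ring
    simp only [pascal, mul_add, add_mul, Finset.sum_add_distrib]
    rw [lower_a, lower_b]
    ring

theorem alternatingSum_eq_sum_multichoose_add (n L : ℕ) (a b : R) {p q : ℤ} (h : p + q = n + L) :
    alternatingSum n L p (a + p) (b + q) = ∑ x ∈ antidiagonal n,
      (-1) ^ x.2 * chooseInt L (p - x.1) *
        (multichoose (a + x.1) x.2 * multichoose (b + x.2) x.1) := by
  induction L generalizing p q with
  | zero =>
    refine sum_congr rfl fun x hx ↦ ?_
    have hn := mem_antidiagonal.1 hx
    by_cases hp : p = x.1
    · obtain rfl : q = x.2 := by lia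
      rw [hp, Int.cast_natCast, Int.cast_natCast]
    · have : chooseInt 0 (p - x.1) = 0 := by
        rcases lt_or_gt_of_ne hp with h | h
        · exact chooseInt_of_neg 0 (by lia)
        · exact chooseInt_of_lt (by lia)
      simp [this]
  | succ L ih =>
    calc alternatingSum n (L + 1) p (a + p) (b + q)
      _ = alternatingSum n (L + 1) p (a + (p - 1 : ℤ) + 1) (b + (q - 1 : ℤ) + 1) := by
        push_cast
        ring_nf
      _ = alternatingSum n L (p - 1) (a + (p - 1 : ℤ)) (b + q) +
          alternatingSum n L p (a + p) (b + (q - 1 : ℤ)) := by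
        rw [alternatingSum_succ]
        push_cast
        ring_nf
      _ = _ := by
        rw [ih (by lia), ih (by lia), ← Finset.sum_add_distrib]
        refine sum_congr rfl fun x _ ↦ ?_
        rw [chooseInt_succ, sub_right_comm]
        push_cast
        ring

theorem sum_antidiagonal_choose_mul_multichoose_add (a b : R) (p q : ℕ) (w : ℕ → R) :
    ∑ x ∈ antidiagonal p, ∑ y ∈ antidiagonal q, ((x.2 + y.2).choose x.2 : R) *
        ((-1) ^ y.1 * (multichoose (a + x.1) y.1 * multichoose (b + y.1) x.1) * w (x.1 + y.1)) =
      ∑ x ∈ antidiagonal p, ∑ y ∈ antidiagonal q, ((x.2 + y.2).choose x.2 : R) *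
        ((-1) ^ y.1 * (multichoose (a + p) y.1 * multichoose (b + q) x.1) * w (x.1 + y.1)) := by
  have diagonal (n : ℕ) (F : ℕ → ℕ → R) : ∑ z ∈ antidiagonal n,
      (chooseInt (p + q - n) (p - z.1) : R) * ((-1) ^ z.2 * F z.1 z.2 * w (z.1 + z.2)) =
      (∑ z ∈ antidiagonal n, (-1) ^ z.2 * chooseInt (p + q - n) (p - z.1) * F z.1 z.2) * w n := by
    rw [Finset.sum_mul]
    refine sum_congr rfl fun z hz ↦ ?_
    rw [mem_antidiagonal.1 hz]
    ring
  rw [sum_antidiagonal_choose_mul p q fun r s ↦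
      (-1) ^ s * (multichoose (a + r) s * multichoose (b + s) r) * w (r + s),
    sum_antidiagonal_choose_mul p q fun r s ↦
      (-1) ^ s * (multichoose (a + p) s * multichoose (b + q) r) * w (r + s)]
  refine sum_congr rfl fun n hn ↦ ?_
  have hpq : (p : ℤ) + q = n + (p + q - n : ℕ) := by
    have := mem_range.1 hn
    lia
  rw [diagonal n fun r s ↦ multichoose (a + r) s * multichoose (b + s) r,
    diagonal n fun r s ↦ multichoose (a + p) s * multichoose (b + q) r,
    ← alternatingSum_eq_sum_multichoose_add n _ a b hpq]
  simp only [alternatingSum, Int.cast_natCast]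

end AlternatingSum

section TripleSum

variable {R : Type*} [CommRing R] [BinomialRing R]

theorem sum_antidiagonal_sum_antidiagonal_swap {M : Type*} [AddCommMonoid M] (l m n : ℕ)
    (f : ℕ × ℕ → ℕ × ℕ → ℕ × ℕ → M) :
    ∑ x ∈ antidiagonal l, ∑ y ∈ antidiagonal m, ∑ z ∈ antidiagonal n, f x y z =
      ∑ z ∈ antidiagonal n, ∑ y ∈ antidiagonal m, ∑ x ∈ antidiagonal l, f x (y.2, y.1) z := by
  rw [Finset.sum_comm, ← Finset.Nat.sum_antidiagonal_swap]
  simp only [Finset.sum_comm (s := antidiagonal l)]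
  exact Finset.sum_comm

/-- The common shape of the triple sums in Eholzer's identity. Antidiagonal elements
`(r, l₁ - r)`, `(s, l₂ - s)`, `(t, l₃ - t)` stand for the indices `r`, `s`, `t`; the parameters `a`,
`b`, `c` are `E + l₁`, `E + l₂`, `E + l₃`, and `F r s` holds the factors that differ between the
sums. -/
def eholzerSum (a b c : R) (l₁ l₂ l₃ : ℕ) (F : ℕ → ℕ → R) : R :=
  ∑ x ∈ antidiagonal l₁, ∑ y ∈ antidiagonal l₂, ∑ z ∈ antidiagonal l₃,
    (-1) ^ y.1 * F x.1 y.1 * (multichoose (b + x.1) z.1 * multichoose (a + y.1) z.2) *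
      (multichoose (c + y.2) x.2 * multichoose c y.2)

theorem eholzerSum_eq_sum_choose_mul (a b c : R) (l₁ l₂ l₃ : ℕ) (F : ℕ → ℕ → R) :
    eholzerSum a b c l₁ l₂ l₃ F = ∑ x ∈ antidiagonal l₁, ∑ y ∈ antidiagonal l₂,
      ((x.2 + y.2).choose x.2 : R) * ((-1) ^ y.1 * F x.1 y.1 *
        (multichoose (a + b + (x.1 + y.1 : ℕ)) l₃ *
          multichoose c (l₁ + l₂ - (x.1 + y.1)))) := by
  refine sum_congr rfl fun x hx ↦ sum_congr rfl fun y hy ↦ ?_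
  have hx := mem_antidiagonal.1 hx
  have hy := mem_antidiagonal.1 hy
  rw [← Finset.sum_mul, ← Finset.mul_sum, ← multichoose_add (.all _ _),
    multichoose_add_mul_multichoose_comm, multichoose_add_mul_multichoose,
    show l₁ + l₂ - (x.1 + y.1) = x.2 + y.2 by lia,
    show b + x.1 + (a + y.1) = a + b + (x.1 + y.1 : ℕ) by push_cast; ring]
  ring

theorem eholzerSum_multichoose_add (a b c : R) (l₁ l₂ l₃ : ℕ) :
    eholzerSum (a + l₁) (b + l₂) c l₁ l₂ l₃
        (fun r s ↦ multichoose (a + r) s * multichoose (b + s) r) =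
      eholzerSum (a + l₁) (b + l₂) c l₁ l₂ l₃
        (fun r s ↦ multichoose (a + l₁) s * multichoose (b + l₂) r) := by
  rw [eholzerSum_eq_sum_choose_mul, eholzerSum_eq_sum_choose_mul]
  exact sum_antidiagonal_choose_mul_multichoose_add a b l₁ l₂ fun n ↦
    multichoose (a + l₁ + (b + l₂) + n) l₃ * multichoose c (l₁ + l₂ - n)

theorem eholzerSum_symm (a b c : R) (l₁ l₂ l₃ : ℕ) :
    eholzerSum a b c l₁ l₂ l₃ (fun r s ↦ multichoose a s * multichoose b r) =
      (-1) ^ l₂ * eholzerSum c b a l₃ l₂ l₁ (fun r s ↦ multichoose c s * multichoose b r) := by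
  rw [eholzerSum, eholzerSum, sum_antidiagonal_sum_antidiagonal_swap l₃]
  simp only [Finset.mul_sum]
  refine sum_congr rfl fun x _ ↦ sum_congr rfl fun y hy ↦ sum_congr rfl fun z _ ↦ ?_
  have sign : (-1 : R) ^ y.1 = (-1) ^ l₂ * (-1) ^ y.2 := by
    rw [← mem_antidiagonal.1 hy, pow_add, mul_assoc, ← mul_pow]
    simp
  rw [sign]
  linear_combination (-1) ^ l₂ * (-1) ^ y.2 * (multichoose a y.1 * multichoose (a + y.1) z.2) *
    (multichoose c y.2 * multichoose (c + y.2) x.2) * multichoose_add_mul_multichoose_comm b x.1 z.1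

theorem left_sum_eq_eholzerSum (l₁ l₂ l₃ : ℕ) (E₁ E₂ E₃ : R) :
    ∑ r ∈ range (l₁ + 1), ∑ s ∈ range (l₂ + 1), ∑ t ∈ range (l₃ + 1),
      (-1 : R) ^ (l₁ + l₂ - s) *
        Ring.choose (E₁ + l₁ + s + l₃ - t - 1) (l₃ - t) *
        Ring.choose (E₁ + r + s - 1) s *
        Ring.choose (E₂ + l₂ + r + t - 1) t *
        Ring.choose (E₂ + r + s - 1) r *
        Ring.choose (E₃ + l₁ - r + l₂ - s + l₃ - 1) (l₁ - r) *
        Ring.choose (E₃ + l₃ + l₂ - s - 1) (l₂ - s)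
      =
    (-1) ^ (l₁ + l₂) * eholzerSum (E₁ + l₁) (E₂ + l₂) (E₃ + l₃) l₁ l₂ l₃
      (fun r s ↦ multichoose (E₁ + r) s * multichoose (E₂ + s) r) := by
  simp only [eholzerSum, Finset.Nat.sum_antidiagonal_eq_sum_range_succ_mk, Finset.mul_sum]
  refine sum_congr rfl fun r hr ↦ sum_congr rfl fun s hs ↦ sum_congr rfl fun t ht ↦ ?_
  have hr := mem_range_succ_iff.1 hr
  have hs := mem_range_succ_iff.1 hs
  have ht := mem_range_succ_iff.1 ht
  have sign : (-1 : R) ^ (l₁ + l₂ - s) = (-1) ^ (l₁ + l₂) * (-1) ^ s := by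
    rw [← pow_add]
    exact neg_one_pow_congr (by grind)
  rw [sign,
    choose_eq_multichoose (x := E₁ + l₁ + s) (by push_cast [ht]; ring),
    choose_eq_multichoose (x := E₁ + r) rfl,
    choose_eq_multichoose (x := E₂ + l₂ + r) rfl,
    choose_eq_multichoose (x := E₂ + s) (by ring),
    choose_eq_multichoose (x := E₃ + l₃ + (l₂ - s : ℕ)) (by push_cast [hr, hs]; ring),
    choose_eq_multichoose (x := E₃ + l₃) (by push_cast [hs]; ring)]
  ring

theorem right_sum_eq_eholzerSum (l₁ l₂ l₃ : ℕ) (E₁ E₂ E₃ : R) :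
    ∑ r ∈ range (l₁ + 1), ∑ s ∈ range (l₂ + 1), ∑ t ∈ range (l₃ + 1),
      (-1 : R) ^ (l₁ + l₂ - s) *
        Ring.choose (E₁ + l₁ + s + l₃ - t - 1) (l₃ - t) *
        Ring.choose (E₁ + l₁ + s - 1) s *
        Ring.choose (E₂ + l₂ - s + t - 1) t *
        Ring.choose (E₂ + l₂ + t + r - 1) r *
        Ring.choose (E₃ + l₁ - r + l₂ - s + l₃ - 1) (l₁ - r) *
        Ring.choose (E₃ + t + l₂ - s - 1) (l₂ - s)
      =
    (-1) ^ l₁ * eholzerSum (E₃ + l₃) (E₂ + l₂) (E₁ + l₁) l₃ l₂ l₁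
      (fun t s ↦ multichoose (E₃ + t) s * multichoose (E₂ + s) t) := by
  rw [eholzerSum, sum_antidiagonal_sum_antidiagonal_swap]
  simp only [Finset.Nat.sum_antidiagonal_eq_sum_range_succ_mk, Finset.mul_sum]
  refine sum_congr rfl fun r hr ↦ sum_congr rfl fun s hs ↦ sum_congr rfl fun t ht ↦ ?_
  have hr := mem_range_succ_iff.1 hr
  have hs := mem_range_succ_iff.1 hs
  have ht := mem_range_succ_iff.1 ht
  rw [Nat.add_sub_assoc hs, pow_add,
    choose_eq_multichoose (x := E₁ + l₁ + s) (by push_cast [ht]; ring),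
    choose_eq_multichoose (x := E₁ + l₁) rfl,
    choose_eq_multichoose (x := E₂ + (l₂ - s : ℕ)) (by push_cast [hs]; ring),
    choose_eq_multichoose (x := E₂ + l₂ + t) rfl,
    choose_eq_multichoose (x := E₃ + l₃ + (l₂ - s : ℕ)) (by push_cast [hr, hs]; ring),
    choose_eq_multichoose (x := E₃ + t) (by push_cast [hs]; ring)]
  ring

theorem eholzer_triple_sum_identity_general (l₁ l₂ l₃ : ℕ) (E₁ E₂ E₃ : R) :
    ∑ r ∈ range (l₁ + 1), ∑ s ∈ range (l₂ + 1), ∑ t ∈ range (l₃ + 1),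
      (-1 : R) ^ (l₁ + l₂ - s) *
        Ring.choose (E₁ + l₁ + s + l₃ - t - 1) (l₃ - t) *
        Ring.choose (E₁ + r + s - 1) s *
        Ring.choose (E₂ + l₂ + r + t - 1) t *
        Ring.choose (E₂ + r + s - 1) r *
        Ring.choose (E₃ + l₁ - r + l₂ - s + l₃ - 1) (l₁ - r) *
        Ring.choose (E₃ + l₃ + l₂ - s - 1) (l₂ - s)
      =
    ∑ r ∈ range (l₁ + 1), ∑ s ∈ range (l₂ + 1), ∑ t ∈ range (l₃ + 1),
      (-1 : R) ^ (l₁ + l₂ - s) *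
        Ring.choose (E₁ + l₁ + s + l₃ - t - 1) (l₃ - t) *
        Ring.choose (E₁ + l₁ + s - 1) s *
        Ring.choose (E₂ + l₂ - s + t - 1) t *
        Ring.choose (E₂ + l₂ + t + r - 1) r *
        Ring.choose (E₃ + l₁ - r + l₂ - s + l₃ - 1) (l₁ - r) *
        Ring.choose (E₃ + t + l₂ - s - 1) (l₂ - s) := by
  rw [left_sum_eq_eholzerSum, right_sum_eq_eholzerSum, eholzerSum_multichoose_add,
    eholzerSum_multichoose_add, eholzerSum_symm (E₃ + l₃ : R), pow_add, mul_assoc]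

end TripleSum

theorem gbinom_eq_choose (x : ℝ) (n : ℕ) : gbinom x n = Ring.choose x n := by
  rw [Ring.choose_eq_smul, ← Polynomial.aeval_eq_smeval, Polynomial.aeval_def,
    ← Polynomial.eval_map, descPochhammer_map, descPochhammer_eval_eq_prod_range, smul_eq_mul,
    inv_mul_eq_div, gbinom]

theorem eholzer_triple_sum_identity (l₁ l₂ l₃ : ℕ) (E : ℝ) :
    ∑ r ∈ Finset.range (l₁ + 1), ∑ s ∈ Finset.range (l₂ + 1), ∑ t ∈ Finset.range (l₃ + 1),
      (-1 : ℝ) ^ (l₁ + l₂ - s) *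
        gbinom (E + l₁ + s + l₃ - t - 1) (l₃ - t) *
        gbinom (E + r + s - 1) s *
        gbinom (E + l₂ + r + t - 1) t *
        gbinom (E + r + s - 1) r *
        gbinom (E + l₁ - r + l₂ - s + l₃ - 1) (l₁ - r) *
        gbinom (E + l₃ + l₂ - s - 1) (l₂ - s)
      =
    ∑ r ∈ Finset.range (l₁ + 1), ∑ s ∈ Finset.range (l₂ + 1), ∑ t ∈ Finset.range (l₃ + 1),
      (-1 : ℝ) ^ (l₁ + l₂ - s) *
        gbinom (E + l₁ + s + l₃ - t - 1) (l₃ - t) *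
        gbinom (E + l₁ + s - 1) s *
        gbinom (E + l₂ - s + t - 1) t *
        gbinom (E + l₂ + t + r - 1) r *
        gbinom (E + l₁ - r + l₂ - s + l₃ - 1) (l₁ - r) *
        gbinom (E + t + l₂ - s - 1) (l₂ - s) := by
  simpa only [gbinom_eq_choose] using eholzer_triple_sum_identity_general l₁ l₂ l₃ E E E
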